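/- Let q ≥ 2 and let 𝒯: V_d → V_d be the linear map determined by 𝒯(τ⊗τ) = Σ_{σ∈N_τ} σ⊗σ for τ ∈ σ_q. Then: (i) 𝒯 commutes with φ⊗²(U) restricted to V_d for every U ∈ 𝒩_q; (ii) 𝒯(Σ_{σ∈σ_q} σ⊗σ) = (d²/2) Σ_{σ∈σ_q} σ⊗σ; (iii) 𝒯²(v) = (d²/4) v for every v = Σ_{σ∈σ_q} λ_σ σ⊗σ with Σ_{σ∈σ_q} λ_σ = 0; (iv) 𝒯 is diagonalizable with eigenvalues d²/2, −d/2 and d/2, of multiplicities 1, d(d+1)/2 − 1 and d(d−1)/2 − 1 respectively. -/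

import Mathlib

open Matrix MeasureTheory
open scoped Kronecker

noncomputable section

namespace CliffordPaper

/-- The single-qubit Pauli matrices `1, X, Y, Z`. -/
def pauli1 : Fin 4 → Matrix (Fin 2) (Fin 2) ℂ :=
  ![1, !![0, 1; 1, 0], !![0, -Complex.I; Complex.I, 0], !![1, 0; 0, -1]]

/-- Index type for the computational basis of `q` qubits. -/
abbrev Idx (q : ℕ) := Fin q → Fin 2

/-- The space `M_d` of `d × d` complex matrices, `d = 2^q`. -/
abbrev Mat (q : ℕ) := Matrix (Idx q) (Idx q) ℂ

/-- The space `M_d ⊗ M_d`, realized as matrices indexed by the product index set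
(the tensor factors combine via the Kronecker product `⊗ₖ`). -/
abbrev BMat (q : ℕ) := Matrix (Idx q × Idx q) (Idx q × Idx q) ℂ

/-- The `q`-fold Kronecker product of single-qubit Paulis with labels `a`. -/
def PauliOp {q : ℕ} (a : Fin q → Fin 4) : Mat q :=
  Matrix.of fun x y => ∏ i, pauli1 (a i) (x i) (y i)

/-- `√d` as a complex number, where `d = 2^q`. -/
def sqrtd (q : ℕ) : ℂ := (Real.sqrt (2 ^ q) : ℝ)

/-- The set `σ̂_q` of normalized Pauli operators. -/
def sigmaHat (q : ℕ) : Set (Mat q) :=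
  {M | ∃ a : Fin q → Fin 4, M = (sqrtd q)⁻¹ • PauliOp a}

/-- The normalized identity `σ₀ = 1/√d`. -/
def sigma0 (q : ℕ) : Mat q := (sqrtd q)⁻¹ • (1 : Mat q)

/-- `σ_q = σ̂_q \ {σ₀}`. -/
def sigmaSet (q : ℕ) : Set (Mat q) := sigmaHat q \ {sigma0 q}

/-- `N_τ`: the normalized nonidentity Paulis anticommuting with `τ`. -/
def NSet {q : ℕ} (τ : Mat q) : Set (Mat q) :=
  {σ | σ ∈ sigmaSet q ∧ σ * τ + τ * σ = 0}

/-- `C_τ`: the normalized nonidentity Paulis distinct from `τ` commuting with `τ`. -/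
def CSet {q : ℕ} (τ : Mat q) : Set (Mat q) :=
  {σ | σ ∈ sigmaSet q ∧ σ ≠ τ ∧ σ * τ = τ * σ}

/-- `Ĉ_τ`: the normalized Paulis commuting with `τ`. -/
def CHatSet {q : ℕ} (τ : Mat q) : Set (Mat q) :=
  {σ | σ ∈ sigmaHat q ∧ σ * τ = τ * σ}

/-- The normalized product `σ·τ = √d στ`. -/
def nprod {q : ℕ} (σ τ : Mat q) : Mat q := sqrtd q • (σ * τ)

/-- The Clifford normalizer `𝒩_q`: unitaries mapping normalized Paulis to
signed normalized Paulis under conjugation. -/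
def Cliff (q : ℕ) : Set (Mat q) :=
  {U | U ∈ Matrix.unitaryGroup (Idx q) ℂ ∧
    ∀ σ ∈ sigmaHat q, ∃ τ ∈ sigmaHat q, U * σ * Uᴴ = τ ∨ U * σ * Uᴴ = -τ}

/-- The two-copy representation `φ⊗²(U) : A ⊗ B ↦ (UAU†) ⊗ (UBU†)`, extended linearly. -/
def twoCopy {q : ℕ} (U : Mat q) : BMat q →ₗ[ℂ] BMat q where
  toFun M := (U ⊗ₖ U) * M * (U ⊗ₖ U)ᴴ
  map_add' M N := by
    show (U ⊗ₖ U) * (M + N) * (U ⊗ₖ U)ᴴ = (U ⊗ₖ U) * M * (U ⊗ₖ U)ᴴ + (U ⊗ₖ U) * N * (U ⊗ₖ U)ᴴ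
    rw [Matrix.mul_add, Matrix.add_mul]
  map_smul' c M := by
    show (U ⊗ₖ U) * (c • M) * (U ⊗ₖ U)ᴴ = c • ((U ⊗ₖ U) * M * (U ⊗ₖ U)ᴴ)
    rw [Matrix.mul_smul, Matrix.smul_mul]

/-- The Hilbert–Schmidt inner product `⟨A, B⟩ = tr(A† B)`. -/
def hs {q : ℕ} (A B : BMat q) : ℂ := (Aᴴ * B).trace

/-- A subspace is invariant under the two-copy representation of `𝒩_q`. -/
def IsInvariant (q : ℕ) (W : Submodule ℂ (BMat q)) : Prop :=
  ∀ U ∈ Cliff q, ∀ v ∈ W, twoCopy U v ∈ W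

/-- A nonzero invariant subspace carries an irreducible subrepresentation. -/
def CarriesIrred (q : ℕ) (W : Submodule ℂ (BMat q)) : Prop :=
  W ≠ ⊥ ∧ IsInvariant q W ∧ ∀ W' ≤ W, IsInvariant q W' → W' = ⊥ ∨ W' = W

/-- Two invariant subspaces carry equivalent subrepresentations: there is a linear
isomorphism between them intertwining the two-copy representation. -/
def EquivRep (q : ℕ) (W W' : Submodule ℂ (BMat q)) : Prop :=
  ∃ T : BMat q →ₗ[ℂ] BMat q, Submodule.map T W = W' ∧
    (∀ x ∈ W, T x = 0 → x = 0) ∧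
    ∀ U ∈ Cliff q, ∀ x ∈ W, T (twoCopy U x) = twoCopy U (T x)

/-- `S_{σ,τ} = (σ⊗τ + τ⊗σ)/√2`. -/
def SVec {q : ℕ} (σ τ : Mat q) : BMat q :=
  ((Real.sqrt 2 : ℂ))⁻¹ • (σ ⊗ₖ τ + τ ⊗ₖ σ)

/-- `A_{σ,τ} = (σ⊗τ − τ⊗σ)/√2`. -/
def AVec {q : ℕ} (σ τ : Mat q) : BMat q :=
  ((Real.sqrt 2 : ℂ))⁻¹ • (σ ⊗ₖ τ - τ ⊗ₖ σ)

/-- The trivial sector `V_id`. -/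
def Vid (q : ℕ) : Submodule ℂ (BMat q) :=
  Submodule.span ℂ {sigma0 q ⊗ₖ sigma0 q}

/-- The right adjoint sector `V_r`. -/
def Vr (q : ℕ) : Submodule ℂ (BMat q) :=
  Submodule.span ℂ {M | ∃ τ ∈ sigmaSet q, M = sigma0 q ⊗ₖ τ}

/-- The left adjoint sector `V_l`. -/
def Vl (q : ℕ) : Submodule ℂ (BMat q) :=
  Submodule.span ℂ {M | ∃ τ ∈ sigmaSet q, M = τ ⊗ₖ sigma0 q}

/-- The diagonal sector `V_d`. -/
def Vdiag (q : ℕ) : Submodule ℂ (BMat q) :=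
  Submodule.span ℂ {M | ∃ τ ∈ sigmaSet q, M = τ ⊗ₖ τ}

/-- The symmetric commuting sector `V_[S]`. -/
def VScom (q : ℕ) : Submodule ℂ (BMat q) :=
  Submodule.span ℂ {M | ∃ τ ∈ sigmaSet q, ∃ σ ∈ CSet τ, M = SVec σ τ}

/-- The symmetric anti-commuting sector `V_{S}`. -/
def VSanti (q : ℕ) : Submodule ℂ (BMat q) :=
  Submodule.span ℂ {M | ∃ τ ∈ sigmaSet q, ∃ σ ∈ NSet τ, M = SVec σ τ}

/-- The antisymmetric commuting sector `V_[A]`. -/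
def VAcom (q : ℕ) : Submodule ℂ (BMat q) :=
  Submodule.span ℂ {M | ∃ τ ∈ sigmaSet q, ∃ σ ∈ CSet τ, M = AVec σ τ}

/-- The antisymmetric anti-commuting sector `V_{A}`. -/
def VAanti (q : ℕ) : Submodule ℂ (BMat q) :=
  Submodule.span ℂ {M | ∃ τ ∈ sigmaSet q, ∃ σ ∈ NSet τ, M = AVec σ τ}

/-- `V_[A]` presented with the spanning vectors `A_{σ,σ·τ}`, `σ ∈ C_τ`. -/
def VAcom' (q : ℕ) : Submodule ℂ (BMat q) :=
  Submodule.span ℂ {M | ∃ τ ∈ sigmaSet q, ∃ σ ∈ CSet τ, M = AVec σ (nprod σ τ)}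

/-- `V_0 = span{Σ_{σ∈σ_q} σ⊗σ}`. -/
def V0diag (q : ℕ) : Submodule ℂ (BMat q) :=
  Submodule.span ℂ {∑ᶠ σ ∈ sigmaSet q, σ ⊗ₖ σ}

/-- `V_1`, the "positive" part of the diagonal sector. -/
def V1diag (q : ℕ) : Submodule ℂ (BMat q) :=
  Submodule.span ℂ {v | ∃ lam : Mat q → ℂ,
    v = ∑ᶠ σ ∈ sigmaSet q, lam σ • (σ ⊗ₖ σ) ∧
    (∑ᶠ σ ∈ sigmaSet q, lam σ) = 0 ∧
    ∀ τ ∈ sigmaSet q, (∑ᶠ σ ∈ NSet τ, lam σ) = -((2 ^ q : ℂ) / 2) * lam τ}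

/-- `V_2`, the "negative" part of the diagonal sector. -/
def V2diag (q : ℕ) : Submodule ℂ (BMat q) :=
  Submodule.span ℂ {v | ∃ lam : Mat q → ℂ,
    v = ∑ᶠ σ ∈ sigmaSet q, lam σ • (σ ⊗ₖ σ) ∧
    (∑ᶠ σ ∈ sigmaSet q, lam σ) = 0 ∧
    ∀ τ ∈ sigmaSet q, (∑ᶠ σ ∈ NSet τ, lam σ) = ((2 ^ q : ℂ) / 2) * lam τ}

/-- `v^[adj]_τ = (2|C_τ|)^{-1/2} Σ_{σ∈C_τ} S_{σ,σ·τ}`. -/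
def vadjS {q : ℕ} (τ : Mat q) : BMat q :=
  ((Real.sqrt (2 * ((CSet τ).ncard : ℝ)) : ℂ))⁻¹ • ∑ᶠ σ ∈ CSet τ, SVec σ (nprod σ τ)

/-- `v^{adj}_τ = (2|N_τ|)^{-1/2} Σ_{σ∈N_τ} A_{σ,iσ·τ}`. -/
def vadjA {q : ℕ} (τ : Mat q) : BMat q :=
  ((Real.sqrt (2 * ((NSet τ).ncard : ℝ)) : ℂ))⁻¹ •
    ∑ᶠ σ ∈ NSet τ, AVec σ (Complex.I • nprod σ τ)

/-- The symmetric adjoint sector `V_[adj]`. -/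
def VadjS (q : ℕ) : Submodule ℂ (BMat q) :=
  Submodule.span ℂ {M | ∃ τ ∈ sigmaSet q, M = vadjS τ}

/-- The antisymmetric adjoint sector `V_{adj}`. -/
def VadjA (q : ℕ) : Submodule ℂ (BMat q) :=
  Submodule.span ℂ {M | ∃ τ ∈ sigmaSet q, M = vadjA τ}

/-- The orthogonal complement `V^⊥_{adj}` of `V_{adj}` inside `V_{A}`. -/
def VadjAperp (q : ℕ) : Submodule ℂ (BMat q) :=
  Submodule.span ℂ {v | v ∈ VAanti q ∧ ∀ w ∈ VadjA q, hs w v = 0}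

/-- `V_{1}^τ`. -/
def V1symτ (q : ℕ) (τ : Mat q) : Submodule ℂ (BMat q) :=
  Submodule.span ℂ {v | ∃ lam : Mat q → ℂ,
    v = ∑ᶠ σ ∈ NSet τ, lam σ • SVec σ (Complex.I • nprod σ τ) ∧
    ∀ ν ∈ NSet τ, (∑ᶠ σ ∈ NSet τ ∩ CSet ν, lam σ) - (∑ᶠ σ ∈ NSet τ ∩ NSet ν, lam σ)
      = ((2 ^ q : ℂ) / 2) * lam ν}

/-- `V_{2}^τ`. -/
def V2symτ (q : ℕ) (τ : Mat q) : Submodule ℂ (BMat q) :=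
  Submodule.span ℂ {v | ∃ lam : Mat q → ℂ,
    v = ∑ᶠ σ ∈ NSet τ, lam σ • SVec σ (Complex.I • nprod σ τ) ∧
    ∀ ν ∈ NSet τ, (∑ᶠ σ ∈ NSet τ ∩ CSet ν, lam σ) - (∑ᶠ σ ∈ NSet τ ∩ NSet ν, lam σ)
      = -((2 ^ q : ℂ) / 2) * lam ν}

/-- `V_{1} = ⊕_τ V_{1}^τ`. -/
def V1sym (q : ℕ) : Submodule ℂ (BMat q) := ⨆ τ ∈ sigmaSet q, V1symτ q τ

/-- `V_{2} = ⊕_τ V_{2}^τ`. -/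
def V2sym (q : ℕ) : Submodule ℂ (BMat q) := ⨆ τ ∈ sigmaSet q, V2symτ q τ

/-- The defining property of the map `Θ` on `V_[A]`. -/
def ThetaProp (q : ℕ) (Θ : BMat q →ₗ[ℂ] BMat q) : Prop :=
  ∀ τ ∈ sigmaSet q, ∀ σ ∈ CSet τ,
    Θ (AVec σ (nprod σ τ)) =
      (∑ᶠ σ' ∈ NSet τ ∩ CSet σ, AVec σ' (Complex.I • nprod σ' τ)) -
      ∑ᶠ σ' ∈ NSet τ ∩ NSet σ, AVec σ' (Complex.I • nprod σ' τ)

/-- `V` = span of off-diagonal products `σ⊗σ̂`, `σ ≠ σ̂`. -/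
def Voff (q : ℕ) : Submodule ℂ (BMat q) :=
  Submodule.span ℂ {M | ∃ σ ∈ sigmaSet q, ∃ σ' ∈ sigmaSet q, σ ≠ σ' ∧ M = σ ⊗ₖ σ'}

/-- `V^τ` = span of the `σ⊗σ̂` with `σ·σ̂ ∈ {τ, −τ, iτ, −iτ}`. -/
def Vtau (q : ℕ) (τ : Mat q) : Submodule ℂ (BMat q) :=
  Submodule.span ℂ {M | ∃ σ ∈ sigmaSet q, ∃ σ' ∈ sigmaSet q,
    (nprod σ σ' = τ ∨ nprod σ σ' = -τ ∨ nprod σ σ' = Complex.I • τ ∨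
      nprod σ σ' = -(Complex.I • τ)) ∧ M = σ ⊗ₖ σ'}

/-!
Let `H` be the symmetric `d² × d²` matrix of signs with which the Paulis commute. It is a tensor
power of the single-qubit sign matrix, so `H² = d² • 1`. In the basis of the `τ ⊗ τ` the map `𝒯` has
matrix `A = (J - H) / 2`, with `J` the all-ones matrix and the row and column of the identity
deleted. Hence `A 1 = (d² / 2) 1` and `A² = (d² / 4)(1 + J)`, so that `A` is annihilated by a
polynomial with the simple roots `d² / 2`, `-d / 2` and `d / 2`, whose multiplicities are determined
by the size `d² - 1` and the traces of `A` and `A²`. A Clifford unitary permutes the Paulis up to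
sign and preserves anticommutation; the signs cancel in `τ ⊗ τ`, so it permutes this basis by an
automorphism of `A`.
-/

section Diagonalizable

variable {K V : Type*} [Field K] [AddCommGroup V] [Module K V]

open Polynomial in
lemma biSup_eigenspace_eq_ker_aeval_prod (f : Module.End K V) (s : Finset K) :
    ⨆ μ ∈ s, f.eigenspace μ = (aeval f (∏ μ ∈ s, (X - C μ))).ker := by
  classical
  induction s using Finset.induction_on with
  | empty => simp [Module.End.one_eq_id]
  | insert a s ha ih =>
    have hcoprime : IsCoprime (X - C a) (∏ μ ∈ s, (X - C μ)) :=
      IsCoprime.prod_right fun μ hμ =>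
        pairwise_coprime_X_sub_C Function.injective_id (ne_of_mem_of_not_mem hμ ha).symm
    rw [Finset.iSup_insert, Finset.prod_insert ha, ih,
      ← sup_ker_aeval_eq_ker_aeval_mul_of_coprime f hcoprime]
    simp [Module.End.eigenspace_def, Module.algebraMap_end_eq_smul_id, Module.End.one_eq_id]

open Polynomial in
lemma trace_aeval_eq_sum_finrank_eigenspace [FiniteDimensional K V] {f : Module.End K V}
    {s : Finset K} (hs : ⨆ μ ∈ s, f.eigenspace μ = ⊤) (p : K[X]) :
    LinearMap.trace K V (aeval f p) =
      ∑ μ ∈ s, (Module.finrank K (f.eigenspace μ) : K) * p.eval μ := by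
  classical
  have haeval (μ : K) {x : V} (hx : x ∈ f.eigenspace μ) : aeval f p x = p.eval μ • x :=
    Module.End.aeval_apply_of_mem_apply_eq_smul (Module.End.mem_eigenspace_iff.1 hx)
  have hmapsTo (μ : s) :
      Set.MapsTo (aeval f p) (f.eigenspace (μ : K)) (f.eigenspace (μ : K)) := fun x hx => by
    rw [haeval μ hx]
    exact Submodule.smul_mem _ _ hx
  have hrestrict (μ : s) :
      (aeval f p).restrict (hmapsTo μ) = p.eval (μ : K) • LinearMap.id :=
    LinearMap.ext fun x => Subtype.ext (haeval μ x.2)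
  have hinternal : DirectSum.IsInternal fun μ : s => f.eigenspace (μ : K) :=
    DirectSum.isInternal_submodule_of_iSupIndep_of_iSup_eq_top
      (f.eigenspaces_iSupIndep.comp Subtype.val_injective) (by rw [← hs, iSup_subtype'])
  rw [LinearMap.trace_eq_sum_trace_restrict hinternal hmapsTo, ← s.sum_coe_sort]
  simp only [hrestrict, map_smul, LinearMap.trace_id, smul_eq_mul, mul_comm]

end Diagonalizable

section Eigenspace

variable {R V W : Type*} [CommRing R] [AddCommGroup V] [Module R V] [AddCommGroup W] [Module R W]
  {F : V →ₗ[R] W} {f : Module.End R V} {T : Module.End R W}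

lemma range_inf_eigenspace_eq_map_eigenspace (hF : Function.Injective F)
    (hT : ∀ v, T (F v) = F (f v)) (μ : R) :
    F.range ⊓ T.eigenspace μ = (f.eigenspace μ).map F := by
  have hcomap : (T.eigenspace μ).comap F = f.eigenspace μ := by
    ext v
    rw [Submodule.mem_comap, Module.End.mem_eigenspace_iff, Module.End.mem_eigenspace_iff, hT,
      ← map_smul, hF.eq_iff]
  rw [← hcomap, Submodule.map_comap_eq]

lemma finrank_range_inf_eigenspace (hF : Function.Injective F)
    (hT : ∀ v, T (F v) = F (f v)) (μ : R) :
    Module.finrank R ↥(F.range ⊓ T.eigenspace μ) = Module.finrank R (f.eigenspace μ) := by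
  rw [range_inf_eigenspace_eq_map_eigenspace hF hT]
  exact (Submodule.equivMapOfInjective F hF _).finrank_eq.symm

end Eigenspace

section StronglyRegular

open Polynomial in
lemma aeval_toLin' {R n : Type*} [CommRing R] [Fintype n] [DecidableEq n] (A : Matrix n n R)
    (p : R[X]) : aeval (toLin' A) p = toLin' (aeval A p) :=
  aeval_algHom_apply (toLinAlgEquiv' (R := R) (n := n)) A p

variable {K I : Type*} [Field K] [CharZero K] [Fintype I] [DecidableEq I]
  {A : Matrix I I K} {d : ℕ}

lemma natCast_half_eigenvalues_pairwise_ne (hd : 2 ≤ d) :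
    (d : K) ^ 2 / 2 ≠ -((d : K) / 2) ∧ (d : K) ^ 2 / 2 ≠ (d : K) / 2 ∧
      -((d : K) / 2) ≠ (d : K) / 2 := by
  have hd0 : (d : K) ≠ 0 := by exact_mod_cast (by omega : d ≠ 0)
  have hd1 : (d : K) ≠ 1 := by exact_mod_cast (by omega : d ≠ 1)
  have hd_succ : (d : K) + 1 ≠ 0 := d.cast_add_one_ne_zero
  refine ⟨fun h => mul_ne_zero hd0 hd_succ ?_, fun h => mul_ne_zero hd0 (sub_ne_zero.2 hd1) ?_,
    fun h => hd0 ?_⟩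
  · linear_combination 2 * h
  · linear_combination 2 * h
  · linear_combination -h

/-- The three values `d² / 2`, `-d / 2`, `d / 2` taken by the spectrum of the reduced matrix of a
symmetric `±1` matrix of order `d²`. -/
def halfEigenvalues (K : Type*) [Field K] (d : ℕ) : Finset K :=
  open Classical in {(d : K) ^ 2 / 2, -((d : K) / 2), (d : K) / 2}

lemma halfEigenvalues_val (hd : 2 ≤ d) :
    (halfEigenvalues K d).val = {(d : K) ^ 2 / 2, -((d : K) / 2), (d : K) / 2} := by
  obtain ⟨h₁₂, h₁₃, h₂₃⟩ := natCast_half_eigenvalues_pairwise_ne (K := K) hd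
  classical
  rw [halfEigenvalues, Finset.insert_val_of_notMem (by simp [h₁₂, h₁₃]),
    Finset.insert_val_of_notMem (by simp [h₂₃])]
  rfl

open Polynomial in
lemma aeval_prod_halfEigenvalues_eq_zero (hd : 2 ≤ d)
    (hone : A *ᵥ 1 = ((d : K) ^ 2 / 2) • (1 : I → K))
    (hsq : A * A = ((d : K) ^ 2 / 4) • (1 + vecMulVec 1 1)) :
    aeval A (∏ μ ∈ halfEigenvalues K d, (X - C μ)) = 0 := by
  have hquad : aeval A ((X - C (-((d : K) / 2))) * (X - C ((d : K) / 2))) =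
      ((d : K) ^ 2 / 4) • vecMulVec 1 1 := by
    simp only [map_mul, map_sub, aeval_X, aeval_C, Algebra.algebraMap_eq_smul_one, sub_mul, mul_sub,
      hsq, smul_mul_assoc, mul_smul_comm, one_mul, mul_one]
    module
  have hlin : aeval A (X - C ((d : K) ^ 2 / 2)) * vecMulVec 1 1 = 0 := by
    simp only [map_sub, aeval_X, aeval_C, Algebra.algebraMap_eq_smul_one, sub_mul, mul_vecMulVec,
      hone, smul_vecMulVec, smul_mul_assoc, one_mul, sub_self]
  have hprod : ∏ μ ∈ halfEigenvalues K d, (X - C μ) =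
      (X - C ((d : K) ^ 2 / 2)) * ((X - C (-((d : K) / 2))) * (X - C ((d : K) / 2))) := by
    simp [Finset.prod_eq_multiset_prod, halfEigenvalues_val hd]
  rw [hprod, map_mul, hquad, mul_smul_comm, hlin, smul_zero]

open Polynomial in
lemma biSup_eigenspace_toLin'_eq_top (hd : 2 ≤ d)
    (hone : A *ᵥ 1 = ((d : K) ^ 2 / 2) • (1 : I → K))
    (hsq : A * A = ((d : K) ^ 2 / 4) • (1 + vecMulVec 1 1)) :
    ⨆ μ ∈ halfEigenvalues K d, Module.End.eigenspace (toLin' A) μ = ⊤ := by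
  rw [biSup_eigenspace_eq_ker_aeval_prod, aeval_toLin',
    aeval_prod_halfEigenvalues_eq_zero hd hone hsq, map_zero, LinearMap.ker_zero]

lemma sup_eigenspace_toLin'_eq_top (hd : 2 ≤ d)
    (hone : A *ᵥ 1 = ((d : K) ^ 2 / 2) • (1 : I → K))
    (hsq : A * A = ((d : K) ^ 2 / 4) • (1 + vecMulVec 1 1)) :
    Module.End.eigenspace (toLin' A) ((d : K) ^ 2 / 2) ⊔
      Module.End.eigenspace (toLin' A) (-((d : K) / 2)) ⊔
      Module.End.eigenspace (toLin' A) ((d : K) / 2) = ⊤ := by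
  classical
  rw [← biSup_eigenspace_toLin'_eq_top hd hone hsq, halfEigenvalues, Finset.iSup_insert,
    Finset.iSup_insert, Finset.iSup_singleton, sup_assoc]

open Polynomial in
lemma sum_halfEigenvalues_finrank_mul_eval (hd : 2 ≤ d)
    (hone : A *ᵥ 1 = ((d : K) ^ 2 / 2) • (1 : I → K))
    (hsq : A * A = ((d : K) ^ 2 / 4) • (1 + vecMulVec 1 1)) (p : K[X]) :
    ∑ μ ∈ halfEigenvalues K d,
        (Module.finrank K (Module.End.eigenspace (toLin' A) μ) : K) * p.eval μ =
      (aeval A p).trace := by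
  rw [← trace_aeval_eq_sum_finrank_eigenspace (biSup_eigenspace_toLin'_eq_top hd hone hsq),
    aeval_toLin', trace_toLin'_eq]

lemma multiplicities_eq_of_moments (hd : 2 ≤ d) {a b c : ℕ}
    (h₀ : (a : K) + b + c = (d : K) ^ 2 - 1)
    (h₁ : (a : K) * ((d : K) ^ 2 / 2) + b * -((d : K) / 2) + c * ((d : K) / 2) = 0)
    (h₂ : (a : K) * ((d : K) ^ 2 / 2) ^ 2 + b * (-((d : K) / 2)) ^ 2 + c * ((d : K) / 2) ^ 2 =
      (d : K) ^ 2 / 2 * ((d : K) ^ 2 - 1)) :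
    a = 1 ∧ b = d * (d + 1) / 2 - 1 ∧ c = d * (d - 1) / 2 - 1 := by
  have hd0 : (d : K) ≠ 0 := by exact_mod_cast (by omega : d ≠ 0)
  have hd1 : (d : K) - 1 ≠ 0 := sub_ne_zero.2 (by exact_mod_cast (by omega : d ≠ 1))
  have hd_succ : (d : K) + 1 ≠ 0 := d.cast_add_one_ne_zero
  have ha : (a : K) = 1 :=
    mul_left_cancel₀ (mul_ne_zero (mul_ne_zero (pow_ne_zero 2 hd0) hd1) hd_succ) (by
      linear_combination 4 * h₂ - (d : K) ^ 2 * h₀)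
  rw [ha] at h₀ h₁
  have hsub : (b : K) - c = d := mul_left_cancel₀ hd0 (by linear_combination -2 * h₁)
  have hb : 2 * (b + 1) = d * (d + 1) := by
    have : 2 * ((b : K) + 1) = d * (d + 1) := by linear_combination h₀ + hsub
    exact_mod_cast this
  have hc : 2 * (c + 1) = d * (d - 1) := by
    have : 2 * ((c : K) + 1) = d * (d - 1) := by linear_combination h₀ - hsub
    rw [← Nat.cast_pred (by omega : 0 < d)] at this
    exact_mod_cast this
  refine ⟨by exact_mod_cast ha, by omega, by omega⟩

open Polynomial in
lemma finrank_eigenspace_toLin' (hd : 2 ≤ d) (hcard : Fintype.card I + 1 = d ^ 2)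
    (htr : A.trace = 0) (hone : A *ᵥ 1 = ((d : K) ^ 2 / 2) • (1 : I → K))
    (hsq : A * A = ((d : K) ^ 2 / 4) • (1 + vecMulVec 1 1)) :
    Module.finrank K (Module.End.eigenspace (toLin' A) ((d : K) ^ 2 / 2)) = 1 ∧
    Module.finrank K (Module.End.eigenspace (toLin' A) (-((d : K) / 2))) = d * (d + 1) / 2 - 1 ∧
    Module.finrank K (Module.End.eigenspace (toLin' A) ((d : K) / 2)) = d * (d - 1) / 2 - 1 := by
  have hcard' : (Fintype.card I : K) = (d : K) ^ 2 - 1 := by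
    rw [eq_sub_iff_add_eq]; exact_mod_cast hcard
  have htr_sq : (A * A).trace = (d : K) ^ 2 / 2 * ((d : K) ^ 2 - 1) := by
    rw [hsq, trace_smul, trace_add, trace_one, trace_vecMulVec, one_dotProduct_one,
      hcard', smul_eq_mul]
    ring
  have hmoment (p : K[X]) := sum_halfEigenvalues_finrank_mul_eval hd hone hsq p
  simp only [Finset.sum_eq_multiset_sum, halfEigenvalues_val hd, Multiset.insert_eq_cons,
    Multiset.map_cons, Multiset.map_singleton, Multiset.sum_cons, Multiset.sum_singleton,
    ← add_assoc] at hmoment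
  refine multiplicities_eq_of_moments (K := K) hd ?_ ?_ ?_
  · simpa [hcard'] using hmoment 1
  · simpa [htr] using hmoment X
  · have hmoment₂ := hmoment (X * X)
    simpa [htr_sq, pow_two] using hmoment₂

end StronglyRegular

section ReducedMatrix

variable {K ι : Type*} [Field K]

/-- For a `±1` matrix `H` normalized to have ones in row and column `o`, the `0`-`1` matrix marking
the entries `-1` of `H`, with row and column `o` deleted. -/
def reducedMatrix (H : Matrix ι ι K) (o : ι) : Matrix {i // i ≠ o} {i // i ≠ o} K :=
  of fun i j => (1 - H i j) / 2

variable [Fintype ι] [DecidableEq ι] {H : Matrix ι ι K} {o : ι}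

lemma trace_reducedMatrix (hdiag : ∀ i, H i i = 1) : (reducedMatrix H o).trace = 0 := by
  simp [reducedMatrix, trace, hdiag]

lemma reducedMatrix_mulVec_one (hcol : ∀ i, H i o = 1)
    (hH : H * H = (Fintype.card ι : K) • 1) :
    reducedMatrix H o *ᵥ 1 = ((Fintype.card ι : K) / 2) • (1 : {i // i ≠ o} → K) := by
  ext ⟨i, hi⟩
  have hrow : ∑ j, H i j = 0 := by simpa [mul_apply, hcol, one_apply, hi] using congrFun₂ hH i o
  calc ∑ j : {j // j ≠ o}, (1 - H i j) / 2 * 1 = ∑ j, (1 - H i j) / 2 * 1 := by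
        simp [Fintype.sum_eq_add_sum_subtype_ne _ o, hcol]
    _ = (Fintype.card ι : K) / 2 * 1 := by
        simp only [mul_one, ← Finset.sum_div, Finset.sum_sub_distrib, hrow, Finset.sum_const,
          Finset.card_univ, nsmul_eq_mul, sub_zero]

lemma reducedMatrix_mul_self (hrow : ∀ j, H o j = 1) (hcol : ∀ i, H i o = 1)
    (hH : H * H = (Fintype.card ι : K) • 1) :
    reducedMatrix H o * reducedMatrix H o =
      ((Fintype.card ι : K) / 4) • (1 + vecMulVec 1 1) := by
  ext ⟨i, hi⟩ ⟨j, hj⟩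
  have hsum_row : ∑ k, H i k = 0 := by simpa [mul_apply, hcol, one_apply, hi] using congrFun₂ hH i o
  have hsum_col : ∑ k, H k j = 0 := by
    simpa [mul_apply, hrow, one_apply, hj.symm] using congrFun₂ hH o j
  have hsum_mul : ∑ k, H i k * H k j = (Fintype.card ι : K) * (1 : Matrix ι ι K) i j := by
    simpa [mul_apply] using congrFun₂ hH i j
  calc ∑ k : {k // k ≠ o}, (1 - H i k) / 2 * ((1 - H k j) / 2)
      = ∑ k, (1 - H i k) / 2 * ((1 - H k j) / 2) := by
        simp [Fintype.sum_eq_add_sum_subtype_ne _ o, hcol]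
    _ = ∑ k, (1 - H i k - H k j + H i k * H k j) / 4 :=
        Finset.sum_congr rfl fun k _ => by rw [div_mul_div_comm]; ring
    _ = ((Fintype.card ι : K) / 4) * ((1 : Matrix ι ι K) i j + 1) := by
        simp only [← Finset.sum_div, Finset.sum_add_distrib, Finset.sum_sub_distrib, hsum_row,
          hsum_col, hsum_mul, Finset.sum_const, Finset.card_univ, nsmul_eq_mul, mul_one]
        ring
    _ = _ := by simp [one_apply, add_comm]

end ReducedMatrix

section PiKronecker

variable {ι R : Type*} {l m n : ι → Type*} [Fintype ι] [CommSemiring R]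

/-- The Kronecker product of a family of matrices. A row (column) of it is a choice of a row
(column) in each factor. -/
def piKronecker (A : ∀ i, Matrix (m i) (n i) R) : Matrix (∀ i, m i) (∀ i, n i) R :=
  of fun x y => ∏ i, A i (x i) (y i)

lemma piKronecker_apply (A : ∀ i, Matrix (m i) (n i) R) (x : ∀ i, m i) (y : ∀ i, n i) :
    piKronecker A x y = ∏ i, A i (x i) (y i) := rfl

lemma piKronecker_mul [DecidableEq ι] [∀ i, Fintype (m i)] (A : ∀ i, Matrix (l i) (m i) R)
    (B : ∀ i, Matrix (m i) (n i) R) :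
    piKronecker A * piKronecker B = piKronecker fun i => A i * B i := by
  ext x y
  simp only [mul_apply, piKronecker_apply, ← Finset.prod_mul_distrib, Finset.prod_univ_sum,
    Fintype.piFinset_univ]

lemma piKronecker_smul (c : ι → R) (A : ∀ i, Matrix (m i) (n i) R) :
    piKronecker (fun i => c i • A i) = (∏ i, c i) • piKronecker A := by
  ext x y
  simp only [piKronecker_apply, Matrix.smul_apply, smul_eq_mul, Finset.prod_mul_distrib]

lemma piKronecker_one [∀ i, DecidableEq (m i)] :
    piKronecker (fun i => (1 : Matrix (m i) (m i) R)) = 1 := by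
  ext x y
  simp [piKronecker_apply, one_apply, Finset.prod_ite_zero, funext_iff]

lemma trace_piKronecker [DecidableEq ι] [∀ i, Fintype (m i)] (A : ∀ i, Matrix (m i) (m i) R) :
    (piKronecker A).trace = ∏ i, (A i).trace := by
  simp only [trace, diag_apply, piKronecker_apply, Finset.prod_univ_sum, Fintype.piFinset_univ]

end PiKronecker

section Pauli

/-- The sign with which two single-qubit Pauli matrices commute. -/
def pauliSign1 : Matrix (Fin 4) (Fin 4) ℂ :=
  of fun a b => if a = 0 ∨ b = 0 ∨ a = b then 1 else -1

lemma pauliSign1_mul_self : pauliSign1 * pauliSign1 = (4 : ℂ) • 1 := by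
  ext a b
  fin_cases a <;> fin_cases b <;>
    simp [pauliSign1, mul_apply, Fin.sum_univ_four, one_apply] <;> norm_num

lemma pauli1_mul_eq_smul (a b : Fin 4) :
    pauli1 a * pauli1 b = pauliSign1 a b • (pauli1 b * pauli1 a) := by
  fin_cases a <;> fin_cases b <;> ext i j <;> fin_cases i <;> fin_cases j <;>
    simp [pauliSign1, pauli1, mul_apply, one_apply]

lemma trace_pauli1_mul (a b : Fin 4) :
    (pauli1 a * pauli1 b).trace = if a = b then 2 else 0 := by
  fin_cases a <;> fin_cases b <;>
    simp [pauli1, trace, one_apply] <;> norm_num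

lemma pauli1_mul_self (a : Fin 4) : pauli1 a * pauli1 a = 1 := by
  fin_cases a <;> ext i j <;> fin_cases i <;> fin_cases j <;>
    simp [pauli1, mul_apply, one_apply]

/-- Labels of the `q`-qubit Pauli operators; `0` labels the identity. -/
abbrev PauliLabel (q : ℕ) := Fin q → Fin 4

variable {q : ℕ}

/-- The matrix of signs with which the `q`-qubit Pauli operators commute. -/
def pauliSign (q : ℕ) : Matrix (PauliLabel q) (PauliLabel q) ℂ :=
  piKronecker fun _ => pauliSign1

lemma pauliSign_mul_self :
    pauliSign q * pauliSign q = (Fintype.card (PauliLabel q) : ℂ) • 1 := by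
  simp only [pauliSign, piKronecker_mul, pauliSign1_mul_self, piKronecker_smul, piKronecker_one]
  simp

lemma pauliSign_zero_left (a : PauliLabel q) : pauliSign q 0 a = 1 := by
  simp [pauliSign, piKronecker_apply, pauliSign1]

lemma pauliSign_zero_right (a : PauliLabel q) : pauliSign q a 0 = 1 := by
  simp [pauliSign, piKronecker_apply, pauliSign1]

lemma pauliSign_self (a : PauliLabel q) : pauliSign q a a = 1 := by
  simp [pauliSign, piKronecker_apply, pauliSign1]

lemma pauliSign_eq_one_or (a b : PauliLabel q) : pauliSign q a b = 1 ∨ pauliSign q a b = -1 := by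
  have hfactor (i : Fin q) : pauliSign1 (a i) (b i) = 1 ∨ pauliSign1 (a i) (b i) = -1 := by
    simp only [pauliSign1, of_apply]
    split_ifs <;> simp
  rw [pauliSign, piKronecker_apply]
  exact Finset.prod_induction _ (fun x : ℂ => x = 1 ∨ x = -1)
    (by rintro x y (rfl | rfl) (rfl | rfl) <;> simp) (Or.inl rfl) fun i _ => hfactor i

lemma PauliOp_mul (a b : PauliLabel q) :
    PauliOp a * PauliOp b = piKronecker fun i => pauli1 (a i) * pauli1 (b i) :=
  piKronecker_mul _ _

lemma PauliOp_mul_eq_smul (a b : PauliLabel q) :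
    PauliOp a * PauliOp b = pauliSign q a b • (PauliOp b * PauliOp a) := by
  simp only [PauliOp_mul, pauli1_mul_eq_smul (a _), piKronecker_smul]
  rfl

lemma trace_PauliOp_mul (a b : PauliLabel q) :
    (PauliOp a * PauliOp b).trace = if a = b then 2 ^ q else 0 := by
  rw [PauliOp_mul, trace_piKronecker]
  simp only [trace_pauli1_mul, Finset.prod_ite_zero, Finset.mem_univ, true_imp_iff, funext_iff,
    Finset.prod_const, Finset.card_univ, Fintype.card_fin]

lemma PauliOp_mul_self (a : PauliLabel q) : PauliOp a * PauliOp a = 1 := by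
  simp only [PauliOp_mul, pauli1_mul_self]
  exact piKronecker_one

lemma PauliOp_mul_add_mul_eq_zero_iff (a b : PauliLabel q) :
    PauliOp a * PauliOp b + PauliOp b * PauliOp a = 0 ↔ pauliSign q a b = -1 := by
  have hunit (a : PauliLabel q) : IsUnit (PauliOp a) :=
    .of_mul_eq_one _ (PauliOp_mul_self a)
  have hne : PauliOp b * PauliOp a ≠ 0 := ((hunit b).mul (hunit a)).ne_zero
  have hsum : PauliOp a * PauliOp b + PauliOp b * PauliOp a =
      (pauliSign q a b + 1) • (PauliOp b * PauliOp a) := by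
    rw [PauliOp_mul_eq_smul a b, add_smul, one_smul]
  rw [hsum, smul_eq_zero_iff_left hne, add_eq_zero_iff_eq_neg]

lemma sqrtd_ne_zero : sqrtd q ≠ 0 := by
  simp [sqrtd, Complex.ofReal_eq_zero]

lemma sqrtd_mul_self : sqrtd q * sqrtd q = 2 ^ q := by
  rw [sqrtd, ← Complex.ofReal_mul, Real.mul_self_sqrt (by positivity)]
  push_cast
  rfl

/-- The normalized Pauli operator with a given label. -/
def normPauli (a : PauliLabel q) : Mat q := (sqrtd q)⁻¹ • PauliOp a

lemma normPauli_zero : normPauli (0 : PauliLabel q) = sigma0 q :=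
  congrArg ((sqrtd q)⁻¹ • ·) piKronecker_one

lemma trace_normPauli_mul (a b : PauliLabel q) :
    (normPauli a * normPauli b).trace = if a = b then 1 else 0 := by
  rw [normPauli, normPauli, smul_mul_smul_comm, trace_smul, trace_PauliOp_mul, smul_eq_mul,
    ← mul_inv, sqrtd_mul_self, mul_ite, mul_zero, inv_mul_cancel₀ (pow_ne_zero q two_ne_zero)]

lemma eq_of_normPauli_eq_or_eq_neg {a b : PauliLabel q}
    (h : normPauli a = normPauli b ∨ normPauli a = -normPauli b) : a = b := by
  have htrace := trace_normPauli_mul a b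
  by_contra hab
  rcases h with h | h <;> simp [h, trace_normPauli_mul, hab] at htrace

lemma normPauli_injective : Function.Injective (normPauli (q := q)) :=
  fun _ _ h => eq_of_normPauli_eq_or_eq_neg (.inl h)

lemma normPauli_mul_add_mul_eq_zero_iff (a b : PauliLabel q) :
    normPauli a * normPauli b + normPauli b * normPauli a = 0 ↔ pauliSign q a b = -1 := by
  rw [← PauliOp_mul_add_mul_eq_zero_iff, normPauli, normPauli, smul_mul_smul_comm,
    smul_mul_smul_comm, ← smul_add, smul_eq_zero_iff_right (by simp [sqrtd_ne_zero])]

end Pauli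

section Coordinates

variable {q : ℕ}

/-- Labels of the Pauli operators other than the identity. -/
abbrev NonzeroPauliLabel (q : ℕ) := {a : PauliLabel q // a ≠ 0}

lemma card_nonzeroPauliLabel : Fintype.card (NonzeroPauliLabel q) + 1 = (2 ^ q) ^ 2 := by
  rw [Fintype.card_subtype_compl, Fintype.card_subtype_eq,
    Nat.sub_add_cancel Fintype.card_pos, Fintype.card_fun, Fintype.card_fin, Fintype.card_fin,
    pow_right_comm]
  norm_num

/-- The `0`-`1` anticommutation matrix of the Pauli operators other than the identity. It is the
matrix of `𝒯` in the basis of the `τ ⊗ τ`. -/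
def anticommMatrix (q : ℕ) : Matrix (NonzeroPauliLabel q) (NonzeroPauliLabel q) ℂ :=
  reducedMatrix (pauliSign q) 0

lemma card_pauliLabel : (Fintype.card (PauliLabel q) : ℂ) = ((2 ^ q : ℕ) : ℂ) ^ 2 := by
  rw [Fintype.card_fun, Fintype.card_fin, Fintype.card_fin]
  push_cast
  rw [pow_right_comm]
  norm_num

lemma trace_anticommMatrix : (anticommMatrix q).trace = 0 :=
  trace_reducedMatrix pauliSign_self

lemma anticommMatrix_mulVec_one :
    anticommMatrix q *ᵥ 1 = (((2 ^ q : ℕ) : ℂ) ^ 2 / 2) • 1 := by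
  rw [anticommMatrix, reducedMatrix_mulVec_one pauliSign_zero_right pauliSign_mul_self,
    card_pauliLabel]

lemma anticommMatrix_mul_self :
    anticommMatrix q * anticommMatrix q =
      (((2 ^ q : ℕ) : ℂ) ^ 2 / 4) • (1 + vecMulVec 1 1) := by
  rw [anticommMatrix, reducedMatrix_mul_self pauliSign_zero_left pauliSign_zero_right
    pauliSign_mul_self, card_pauliLabel]

lemma anticommMatrix_mulVec_mulVec {v : NonzeroPauliLabel q → ℂ} (hv : ∑ a, v a = 0) :
    anticommMatrix q *ᵥ (anticommMatrix q *ᵥ v) = ((2 ^ q : ℂ) ^ 2 / 4) • v := by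
  rw [mulVec_mulVec, anticommMatrix_mul_self, smul_mulVec, add_mulVec, one_mulVec,
    vecMulVec_mulVec, one_dotProduct, hv]
  simp

lemma sup_eigenspace_anticommMatrix (hq : 1 ≤ q) :
    Module.End.eigenspace (toLin' (anticommMatrix q)) ((2 ^ q : ℂ) ^ 2 / 2) ⊔
      Module.End.eigenspace (toLin' (anticommMatrix q)) (-((2 ^ q : ℂ) / 2)) ⊔
      Module.End.eigenspace (toLin' (anticommMatrix q)) ((2 ^ q : ℂ) / 2) = ⊤ := by
  have hcast : (2 : ℂ) ^ q = ((2 ^ q : ℕ) : ℂ) := by push_cast; rfl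
  rw [hcast]
  exact sup_eigenspace_toLin'_eq_top (Nat.le_self_pow (by omega) 2) anticommMatrix_mulVec_one
    anticommMatrix_mul_self

lemma finrank_eigenspace_anticommMatrix (hq : 1 ≤ q) :
    Module.finrank ℂ (Module.End.eigenspace (toLin' (anticommMatrix q)) ((2 ^ q : ℂ) ^ 2 / 2)) =
      1 ∧
    Module.finrank ℂ (Module.End.eigenspace (toLin' (anticommMatrix q)) (-((2 ^ q : ℂ) / 2))) =
      2 ^ q * (2 ^ q + 1) / 2 - 1 ∧
    Module.finrank ℂ (Module.End.eigenspace (toLin' (anticommMatrix q)) ((2 ^ q : ℂ) / 2)) =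
      2 ^ q * (2 ^ q - 1) / 2 - 1 := by
  have hcast : (2 : ℂ) ^ q = ((2 ^ q : ℕ) : ℂ) := by push_cast; rfl
  rw [hcast]
  exact finrank_eigenspace_toLin' (Nat.le_self_pow (by omega) 2) card_nonzeroPauliLabel
    trace_anticommMatrix anticommMatrix_mulVec_one anticommMatrix_mul_self

lemma anticommMatrix_apply [DecidableEq (Mat q)] (a b : NonzeroPauliLabel q) :
    anticommMatrix q a b =
      if normPauli a.1 * normPauli b.1 + normPauli b.1 * normPauli a.1 = 0 then 1 else 0 := by
  rw [anticommMatrix, reducedMatrix, of_apply]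
  simp only [normPauli_mul_add_mul_eq_zero_iff]
  rcases pauliSign_eq_one_or a.1 b.1 with h | h <;> rw [h] <;> norm_num

lemma sigmaHat_eq_range : sigmaHat q = Set.range (normPauli (q := q)) := by
  ext M
  simp only [sigmaHat, Set.mem_ofPred_eq, Set.mem_range, normPauli, eq_comm]

lemma sigmaSet_eq_range :
    sigmaSet q = Set.range fun a : NonzeroPauliLabel q => normPauli a.1 := by
  rw [sigmaSet, sigmaHat_eq_range, ← normPauli_zero, ← Set.image_singleton, ← Set.image_univ,
    ← Set.image_sdiff normPauli_injective, ← Set.compl_eq_univ_sdiff, Set.image_eq_range]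
  rfl

lemma normPauli_comp_val_injective :
    Function.Injective fun a : NonzeroPauliLabel q => normPauli a.1 :=
  normPauli_injective.comp Subtype.val_injective

lemma finsum_mem_sigmaSet {M : Type*} [AddCommMonoid M] (f : Mat q → M) :
    ∑ᶠ σ ∈ sigmaSet q, f σ = ∑ a : NonzeroPauliLabel q, f (normPauli a.1) := by
  rw [sigmaSet_eq_range, finsum_mem_range normPauli_comp_val_injective, finsum_eq_sum_of_fintype]

lemma finsum_mem_NSet {M : Type*} [AddCommMonoid M] [Module ℂ M] (f : Mat q → M)
    (b : NonzeroPauliLabel q) :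
    ∑ᶠ σ ∈ NSet (normPauli b.1), f σ =
      ∑ a : NonzeroPauliLabel q, anticommMatrix q a b • f (normPauli a.1) := by
  classical
  have hindicator (σ : Mat q) : (∑ᶠ _ : σ ∈ NSet (normPauli b.1), f σ) =
      ∑ᶠ _ : σ ∈ sigmaSet q, if σ * normPauli b.1 + normPauli b.1 * σ = 0 then f σ else 0 := by
    simp only [NSet, Set.mem_ofPred_eq, finsum_eq_if, ite_and]
  simp only [hindicator, finsum_mem_sigmaSet, anticommMatrix_apply, ite_smul, one_smul, zero_smul]

/-- The vectors `τ ⊗ τ` spanning the diagonal sector. -/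
def pauliSquare (a : NonzeroPauliLabel q) : BMat q := normPauli a.1 ⊗ₖ normPauli a.1

lemma trace_pauliSquare_mul (a b : NonzeroPauliLabel q) :
    (pauliSquare a * pauliSquare b).trace = if a = b then 1 else 0 := by
  rw [pauliSquare, pauliSquare, ← mul_kronecker_mul, trace_kronecker, trace_normPauli_mul]
  simp [Subtype.ext_iff]

lemma linearIndependent_pauliSquare : LinearIndependent ℂ (pauliSquare (q := q)) :=
  LinearIndependent.of_pairwise_dual_eq_zero_one _
    (fun a => traceLinearMap _ ℂ ℂ ∘ₗ LinearMap.mulRight ℂ (pauliSquare a))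
    (fun a b hab => (trace_pauliSquare_mul b a).trans (if_neg hab.symm))
    fun a => (trace_pauliSquare_mul a a).trans (if_pos rfl)

lemma Vdiag_eq_span_range : Vdiag q = Submodule.span ℂ (Set.range (pauliSquare (q := q))) := by
  rw [Vdiag, sigmaSet_eq_range]
  congr 1
  ext M
  rw [Set.mem_ofPred_eq, Set.exists_range_iff]
  simp only [Set.mem_range, pauliSquare, eq_comm]

/-- The vector of the diagonal sector with given coordinates in the `τ ⊗ τ`. -/
def ofDiagCoords (q : ℕ) : (NonzeroPauliLabel q → ℂ) →ₗ[ℂ] BMat q :=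
  Fintype.linearCombination ℂ pauliSquare

lemma ofDiagCoords_injective : Function.Injective (ofDiagCoords q) :=
  linearIndependent_pauliSquare.fintypeLinearCombination_injective

lemma range_ofDiagCoords : (ofDiagCoords q).range = Vdiag q := by
  rw [Vdiag_eq_span_range, ofDiagCoords, Fintype.range_linearCombination]

lemma finsum_mem_sigmaSet_kronecker :
    ∑ᶠ σ ∈ sigmaSet q, σ ⊗ₖ σ = ofDiagCoords q 1 := by
  simp only [finsum_mem_sigmaSet, ofDiagCoords, Fintype.linearCombination_apply, Pi.one_apply,
    one_smul, pauliSquare]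

lemma finsum_mem_sigmaSet_smul_kronecker (lam : Mat q → ℂ) :
    ∑ᶠ σ ∈ sigmaSet q, lam σ • (σ ⊗ₖ σ) = ofDiagCoords q fun a => lam (normPauli a.1) :=
  finsum_mem_sigmaSet _

end Coordinates

section MatrixOnFamily

variable {R V I : Type*} [CommSemiring R] [AddCommMonoid V] [Module R V] [Fintype I]
  {b : I → V} {A : Matrix I I R} {T : V →ₗ[R] V}

lemma map_linearCombination_eq (hT : ∀ j, T (b j) = ∑ i, A i j • b i) (v : I → R) :
    T (Fintype.linearCombination R b v) = Fintype.linearCombination R b (A *ᵥ v) := by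
  simp only [Fintype.linearCombination_apply, map_sum, map_smul, hT, mulVec, dotProduct,
    Finset.sum_smul, Finset.smul_sum, smul_smul, mul_comm]
  exact Finset.sum_comm

lemma map_comm_of_mem_span_of_perm {S : V →ₗ[R] V} {π : Equiv.Perm I}
    (hT : ∀ j, T (b j) = ∑ i, A i j • b i) (hS : ∀ i, S (b i) = b (π i))
    (hA : A.submatrix π π = A) {v : V} (hv : v ∈ Submodule.span R (Set.range b)) :
    T (S v) = S (T v) := by
  have hcomm : Set.EqOn (T ∘ₗ S) (S ∘ₗ T) (Set.range b) := by
    rintro _ ⟨j, rfl⟩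
    calc T (S (b j)) = ∑ i, A i (π j) • b i := by rw [hS, hT]
      _ = ∑ i, A (π i) (π j) • b (π i) :=
        (Equiv.sum_comp π fun i => A i (π j) • b i).symm
      _ = ∑ i, A i j • b (π i) := Finset.sum_congr rfl fun i _ => by rw [← congrFun₂ hA i j]; rfl
      _ = S (T (b j)) := by simp only [hT, map_sum, map_smul, hS]
  exact LinearMap.eqOn_span hcomm hv

end MatrixOnFamily

section Clifford

variable {q : ℕ}

lemma kronecker_self_eq_of_eq_or_eq_neg {R m n : Type*} [Mul R] [HasDistribNeg R]
    {A B : Matrix m n R} (h : A = B ∨ A = -B) : A ⊗ₖ A = B ⊗ₖ B := by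
  rcases h with rfl | rfl
  · rfl
  · ext
    simp [kroneckerMap_apply]

lemma mul_add_mul_eq_zero_iff_of_eq_or_eq_neg {R : Type*} [Ring R] {x y x' y' : R}
    (hx : x = x' ∨ x = -x') (hy : y = y' ∨ y = -y') :
    x * y + y * x = 0 ↔ x' * y' + y' * x' = 0 := by
  rcases hx with rfl | rfl <;> rcases hy with rfl | rfl <;>
    simp only [neg_mul, mul_neg, neg_neg, ← neg_add, neg_eq_zero]

lemma exists_perm_of_map_normPauli (e : Mat q ≃ₐ[ℂ] Mat q)
    (he : ∀ a, ∃ b, e (normPauli a) = normPauli b ∨ e (normPauli a) = -normPauli b) :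
    ∃ π : Equiv.Perm (NonzeroPauliLabel q), ∀ a,
      e (normPauli a.1) = normPauli (π a).1 ∨ e (normPauli a.1) = -normPauli (π a).1 := by
  choose g hg using he
  have hg_inj : Function.Injective g := fun a b hab => eq_of_normPauli_eq_or_eq_neg <| by
    rw [← e.injective.eq_iff, ← e.injective.eq_iff (b := -normPauli b), map_neg]
    rcases hg a with ha | ha <;> rcases hg b with hb | hb <;> simp [ha, hb, hab]
  have hg_zero : g 0 = 0 := by
    have he_zero : e (normPauli 0) = normPauli 0 := by
      rw [normPauli_zero, sigma0, map_smul, map_one]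
    refine (eq_of_normPauli_eq_or_eq_neg ?_).symm
    rw [← he_zero]
    exact hg 0
  let g' : NonzeroPauliLabel q → NonzeroPauliLabel q :=
    fun a => ⟨g a.1, fun h => a.2 (hg_inj (h.trans hg_zero.symm))⟩
  have hg'_inj : Function.Injective g' := fun a b hab =>
    Subtype.ext (hg_inj (congrArg Subtype.val hab))
  exact ⟨.ofBijective g' (Finite.injective_iff_bijective.1 hg'_inj), fun a => hg a.1⟩

lemma anticommMatrix_submatrix_perm (e : Mat q ≃ₐ[ℂ] Mat q) {π : Equiv.Perm (NonzeroPauliLabel q)}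
    (hπ : ∀ a : NonzeroPauliLabel q,
      e (normPauli a.1) = normPauli (π a).1 ∨ e (normPauli a.1) = -normPauli (π a).1) :
    (anticommMatrix q).submatrix π π = anticommMatrix q := by
  classical
  ext a b
  simp only [submatrix_apply, anticommMatrix_apply,
    ← mul_add_mul_eq_zero_iff_of_eq_or_eq_neg (hπ a) (hπ b), ← map_mul, ← map_add,
    map_eq_zero_iff e e.injective]

lemma twoCopy_kronecker (U A B : Mat q) :
    twoCopy U (A ⊗ₖ B) = (U * A * Uᴴ) ⊗ₖ (U * B * Uᴴ) := by
  rw [mul_kronecker_mul, mul_kronecker_mul, ← conjTranspose_kronecker]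
  rfl

lemma exists_perm_of_mem_Cliff {U : Mat q} (hU : U ∈ Cliff q) :
    ∃ π : Equiv.Perm (NonzeroPauliLabel q),
      (∀ a, twoCopy U (pauliSquare a) = pauliSquare (π a)) ∧
        (anticommMatrix q).submatrix π π = anticommMatrix q := by
  obtain ⟨hU_unitary, hU_pauli⟩ := hU
  let e : Mat q ≃ₐ[ℂ] Mat q := (Unitary.conjStarAlgAut ℂ (Mat q) ⟨U, hU_unitary⟩).toAlgEquiv
  have he (A : Mat q) : e A = U * A * Uᴴ := rfl
  obtain ⟨π, hπ⟩ := exists_perm_of_map_normPauli e (by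
    simpa [sigmaHat_eq_range, he] using hU_pauli)
  refine ⟨π, fun a => ?_, anticommMatrix_submatrix_perm e hπ⟩
  rw [pauliSquare, twoCopy_kronecker, ← he]
  exact kronecker_self_eq_of_eq_or_eq_neg (hπ a)

end Clifford

section DiagonalSector

variable {q : ℕ} {T : BMat q →ₗ[ℂ] BMat q}

lemma map_pauliSquare (hT : ∀ τ ∈ sigmaSet q, T (τ ⊗ₖ τ) = ∑ᶠ σ ∈ NSet τ, σ ⊗ₖ σ)
    (b : NonzeroPauliLabel q) :
    T (pauliSquare b) = ∑ a, anticommMatrix q a b • pauliSquare a := by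
  rw [pauliSquare, hT _ (sigmaSet_eq_range ▸ Set.mem_range_self b), finsum_mem_NSet]
  rfl

lemma map_ofDiagCoords (hT : ∀ τ ∈ sigmaSet q, T (τ ⊗ₖ τ) = ∑ᶠ σ ∈ NSet τ, σ ⊗ₖ σ)
    (v : NonzeroPauliLabel q → ℂ) :
    T (ofDiagCoords q v) = ofDiagCoords q (toLin' (anticommMatrix q) v) := by
  rw [ofDiagCoords, toLin'_apply]
  exact map_linearCombination_eq (map_pauliSquare hT) v

lemma Vdiag_inf_eigenspace_eq_map
    (hT : ∀ τ ∈ sigmaSet q, T (τ ⊗ₖ τ) = ∑ᶠ σ ∈ NSet τ, σ ⊗ₖ σ) (μ : ℂ) :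
    Vdiag q ⊓ Module.End.eigenspace T μ =
      (Module.End.eigenspace (toLin' (anticommMatrix q)) μ).map (ofDiagCoords q) := by
  rw [← range_ofDiagCoords]
  exact range_inf_eigenspace_eq_map_eigenspace ofDiagCoords_injective (map_ofDiagCoords hT) μ

lemma finrank_Vdiag_inf_eigenspace
    (hT : ∀ τ ∈ sigmaSet q, T (τ ⊗ₖ τ) = ∑ᶠ σ ∈ NSet τ, σ ⊗ₖ σ) (μ : ℂ) :
    Module.finrank ℂ ↥(Vdiag q ⊓ Module.End.eigenspace T μ) =
      Module.finrank ℂ (Module.End.eigenspace (toLin' (anticommMatrix q)) μ) := by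
  rw [← range_ofDiagCoords]
  exact finrank_range_inf_eigenspace ofDiagCoords_injective (map_ofDiagCoords hT) μ

end DiagonalSector

theorem statement4_general (q : ℕ) (hq : 1 ≤ q)
    (T : BMat q →ₗ[ℂ] BMat q)
    (hT : ∀ τ ∈ sigmaSet q, T (τ ⊗ₖ τ) = ∑ᶠ σ ∈ NSet τ, σ ⊗ₖ σ) :
    (∀ U ∈ Cliff q, ∀ v ∈ Vdiag q, T (twoCopy U v) = twoCopy U (T v)) ∧
    T (∑ᶠ σ ∈ sigmaSet q, σ ⊗ₖ σ) =
      ((2 ^ q : ℂ) ^ 2 / 2) • ∑ᶠ σ ∈ sigmaSet q, σ ⊗ₖ σ ∧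
    (∀ lam : Mat q → ℂ, (∑ᶠ σ ∈ sigmaSet q, lam σ) = 0 →
      T (T (∑ᶠ σ ∈ sigmaSet q, lam σ • (σ ⊗ₖ σ))) =
        ((2 ^ q : ℂ) ^ 2 / 4) • ∑ᶠ σ ∈ sigmaSet q, lam σ • (σ ⊗ₖ σ)) ∧
    Vdiag q =
      (Vdiag q ⊓ Module.End.eigenspace T ((2 ^ q : ℂ) ^ 2 / 2)) ⊔
      (Vdiag q ⊓ Module.End.eigenspace T (-((2 ^ q : ℂ) / 2))) ⊔
      (Vdiag q ⊓ Module.End.eigenspace T ((2 ^ q : ℂ) / 2)) ∧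
    Module.finrank ℂ ↥(Vdiag q ⊓ Module.End.eigenspace T ((2 ^ q : ℂ) ^ 2 / 2)) = 1 ∧
    Module.finrank ℂ ↥(Vdiag q ⊓ Module.End.eigenspace T (-((2 ^ q : ℂ) / 2))) =
      2 ^ q * (2 ^ q + 1) / 2 - 1 ∧
    Module.finrank ℂ ↥(Vdiag q ⊓ Module.End.eigenspace T ((2 ^ q : ℂ) / 2)) =
      2 ^ q * (2 ^ q - 1) / 2 - 1 := by
  have hT_coords (v : NonzeroPauliLabel q → ℂ) :
      T (ofDiagCoords q v) = ofDiagCoords q (anticommMatrix q *ᵥ v) := map_ofDiagCoords hT v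
  refine ⟨fun U hU v hv => ?_, ?_, fun lam hlam => ?_, ?_, ?_⟩
  · obtain ⟨π, hU_pauliSquare, hπ⟩ := exists_perm_of_mem_Cliff hU
    rw [Vdiag_eq_span_range] at hv
    exact map_comm_of_mem_span_of_perm (map_pauliSquare hT) hU_pauliSquare hπ hv
  · rw [finsum_mem_sigmaSet_kronecker, hT_coords, anticommMatrix_mulVec_one, map_smul]
    push_cast
    rfl
  · rw [finsum_mem_sigmaSet] at hlam
    rw [finsum_mem_sigmaSet_smul_kronecker, hT_coords, hT_coords,
      anticommMatrix_mulVec_mulVec hlam, map_smul]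
  · rw [Vdiag_inf_eigenspace_eq_map hT, Vdiag_inf_eigenspace_eq_map hT,
      Vdiag_inf_eigenspace_eq_map hT, ← Submodule.map_sup, ← Submodule.map_sup,
      sup_eigenspace_anticommMatrix hq, Submodule.map_top, range_ofDiagCoords]
  · rw [finrank_Vdiag_inf_eigenspace hT, finrank_Vdiag_inf_eigenspace hT,
      finrank_Vdiag_inf_eigenspace hT]
    exact finrank_eigenspace_anticommMatrix hq

/-- properties of the map `𝒯` on the diagonal sector determined by
`𝒯(τ⊗τ) = Σ_{σ∈N_τ} σ⊗σ`. -/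
theorem statement4 (q : ℕ) (hq : 2 ≤ q)
    (T : BMat q →ₗ[ℂ] BMat q)
    (hT : ∀ τ ∈ sigmaSet q, T (τ ⊗ₖ τ) = ∑ᶠ σ ∈ NSet τ, σ ⊗ₖ σ) :
    (∀ U ∈ Cliff q, ∀ v ∈ Vdiag q, T (twoCopy U v) = twoCopy U (T v)) ∧
    T (∑ᶠ σ ∈ sigmaSet q, σ ⊗ₖ σ) =
      ((2 ^ q : ℂ) ^ 2 / 2) • ∑ᶠ σ ∈ sigmaSet q, σ ⊗ₖ σ ∧
    (∀ lam : Mat q → ℂ, (∑ᶠ σ ∈ sigmaSet q, lam σ) = 0 →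
      T (T (∑ᶠ σ ∈ sigmaSet q, lam σ • (σ ⊗ₖ σ))) =
        ((2 ^ q : ℂ) ^ 2 / 4) • ∑ᶠ σ ∈ sigmaSet q, lam σ • (σ ⊗ₖ σ)) ∧
    Vdiag q =
      (Vdiag q ⊓ Module.End.eigenspace T ((2 ^ q : ℂ) ^ 2 / 2)) ⊔
      (Vdiag q ⊓ Module.End.eigenspace T (-((2 ^ q : ℂ) / 2))) ⊔
      (Vdiag q ⊓ Module.End.eigenspace T ((2 ^ q : ℂ) / 2)) ∧
    Module.finrank ℂ ↥(Vdiag q ⊓ Module.End.eigenspace T ((2 ^ q : ℂ) ^ 2 / 2)) = 1 ∧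
    Module.finrank ℂ ↥(Vdiag q ⊓ Module.End.eigenspace T (-((2 ^ q : ℂ) / 2))) =
      2 ^ q * (2 ^ q + 1) / 2 - 1 ∧
    Module.finrank ℂ ↥(Vdiag q ⊓ Module.End.eigenspace T ((2 ^ q : ℂ) / 2)) =
      2 ^ q * (2 ^ q - 1) / 2 - 1 :=
  statement4_general q (by omega) T hT

end CliffordPaper
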